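/- arXiv:2109.09239 — 2 statements merged into one kernel-verified Lean document; each statement's English description precedes it below -/
import Mathlib

section
/- Assume Condition (A1). For every A₀ > 0 there exist constants K₀, M₁, α₀ > 0, depending only on A₀ and the constants C_ξ, H_ξ, α_ξ of (A1), such that for every θ ∈ ℝⁿ and every M ≥ 0: ℙ_θ( |Ĩ(K₀)| ≥ M₁·|I_*(A₀,θ)| + M ) ≤ H₀·e^{−α₀·ℓ(|I_*(A₀,θ)|)}·e^{−α₀·M/2}. -/
open MeasureTheory Finset
open scoped Classical

/-- `ell n k = k * log(q*n/k)` with `q = e^2`; equals `0` at `k = 0` by Lean's conventions. -/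
noncomputable def ell (n k : ℕ) : ℝ := (k : ℝ) * Real.log (Real.exp 2 * n / k)

/-!
A selected set `J` much larger than the active set `I` must pay for itself: the criterion of the
data gains of order `K σ² ℓ(|J|)` from `J \ I`, whereas minimality of `I` caps the signal energy on
`J \ I` by `A σ² ℓ(|J|)`. For `K` large the remainder is noise energy on `J`, at least
`C |J| + (1 + r) α⁻¹ ℓ(|J|)`. By (A1) this has probability at most `H e^{-(1 + r) ℓ(|J|)}` for each
fixed `J`. One factor `e^{-ℓ(|J|)}` pays for the union bound, because the number of sets of size `k`
is at most `e^{ℓ(k) - k}`, and the factor `e^{-r ℓ(|J|)}` is the asserted decay.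
-/

section Ell

variable {n k s : ℕ}

lemma ell_zero_left (k : ℕ) : ell 0 k = 0 := by simp [ell]

lemma ell_zero_right (n : ℕ) : ell n 0 = 0 := by simp [ell]

lemma ell_eq_mul_two_add_log (hn : n ≠ 0) (k : ℕ) :
    ell n k = k * (2 + Real.log (n / k)) := by
  rcases eq_or_ne k 0 with rfl | hk
  · simp [ell_zero_right]
  · rw [ell, mul_div_assoc, Real.log_mul (Real.exp_ne_zero 2) (by positivity), Real.log_exp]

lemma ell_eq_mul_log_add_mul_log (hn : n ≠ 0) (hk : k ≠ 0) (s : ℕ) :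
    ell n s = s * (2 + Real.log (n / k)) + s * Real.log ((k : ℝ) / s) := by
  rcases eq_or_ne s 0 with rfl | hs
  · simp [ell_zero_right]
  · have hlog : Real.log ((n : ℝ) / s) = Real.log (n / k) + Real.log (k / s) := by
      rw [← Real.log_mul (by positivity) (by positivity), div_mul_div_cancel₀ (by positivity)]
    rw [ell_eq_mul_two_add_log hn, hlog]
    ring

lemma log_div_nonneg (hkn : k ≤ n) : 0 ≤ Real.log ((n : ℝ) / k) := by
  rcases Nat.eq_zero_or_pos k with rfl | hk
  · simp
  · exact Real.log_nonneg ((one_le_div₀ (by positivity)).mpr (by exact_mod_cast hkn))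

lemma two_mul_le_ell (hkn : k ≤ n) : 2 * (k : ℝ) ≤ ell n k := by
  rcases Nat.eq_zero_or_pos k with rfl | hk
  · simp [ell_zero_right]
  · rw [ell_eq_mul_two_add_log (by omega), mul_comm]
    gcongr
    exact le_add_of_nonneg_right (log_div_nonneg hkn)

lemma ell_nonneg (hkn : k ≤ n) : 0 ≤ ell n k :=
  le_trans (by positivity) (two_mul_le_ell hkn)

lemma mul_log_div_le_sub {x y : ℝ} (hx : 0 < x) (hy : 0 < y) : y * Real.log (x / y) ≤ x - y :=
  calc y * Real.log (x / y) ≤ y * (x / y - 1) := by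
        gcongr
        exact Real.log_le_sub_one_of_pos (by positivity)
    _ = x - y := by field_simp

lemma two_mul_mul_log_div_le {x y : ℝ} (hx : 0 < x) (hy : 0 < y) :
    2 * y * Real.log (x / y) ≤ x := by
  have hscaled := mul_log_div_le_sub hx (mul_pos two_pos hy)
  rw [div_mul_eq_div_div_swap, Real.log_div (by positivity) two_ne_zero] at hscaled
  have hlog_two : Real.log 2 ≤ 1 := by linarith [Real.log_two_lt_d9]
  linarith [mul_le_of_le_one_right hy.le hlog_two]

lemma monotoneOn_ell (n : ℕ) : MonotoneOn (ell n) (Set.Iic n) := by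
  intro s _ k (hkn : k ≤ n) hsk
  rcases Nat.eq_zero_or_pos s with rfl | hs
  · exact (ell_zero_right n).trans_le (ell_nonneg hkn)
  have hk : 0 < k := hs.trans_le hsk
  have hrescaled := mul_log_div_le_sub (x := k) (y := s) (by positivity) (by positivity)
  have hsk' : (s : ℝ) ≤ k := by exact_mod_cast hsk
  have hlog : 0 ≤ (k - s) * Real.log ((n : ℝ) / k) :=
    mul_nonneg (sub_nonneg.mpr hsk') (log_div_nonneg hkn)
  rw [ell_eq_mul_log_add_mul_log (by omega) hk.ne' s, ell_eq_mul_two_add_log (by omega)]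
  linarith

lemma two_mul_ell_le_ell (hsk : 4 * s ≤ k) (hkn : k ≤ n) : 2 * ell n s ≤ ell n k := by
  rcases Nat.eq_zero_or_pos s with rfl | hs
  · simpa [ell_zero_right] using ell_nonneg hkn
  have hk : 0 < k := by omega
  have hrescaled := two_mul_mul_log_div_le (x := k) (y := s) (by positivity) (by positivity)
  have hsk' : 4 * (s : ℝ) ≤ k := by exact_mod_cast hsk
  have hlog : 0 ≤ (k - 2 * s) * Real.log ((n : ℝ) / k) :=
    mul_nonneg (by linarith) (log_div_nonneg hkn)
  rw [ell_eq_mul_log_add_mul_log (by omega) hk.ne' s, ell_eq_mul_two_add_log (by omega)]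
  linarith

lemma ell_add_half_le_ell {M : ℝ} (hM : 0 ≤ M) (hsk : 4 * (s : ℝ) + M ≤ k) (hkn : k ≤ n) :
    ell n s + M / 2 ≤ ell n k := by
  have hsk' : 4 * s ≤ k := by exact_mod_cast (le_of_add_le_of_nonneg_left hsk hM)
  linarith [two_mul_ell_le_ell hsk' hkn, two_mul_le_ell hkn, Nat.cast_nonneg (α := ℝ) s]

lemma ell_add_le (n s k : ℕ) : ell n (s + k) ≤ ell n s + ell n k := by
  rcases Nat.eq_zero_or_pos n with rfl | hn
  · simp [ell_zero_left]
  rcases Nat.eq_zero_or_pos s with rfl | hs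
  · simp [ell_zero_right]
  rcases Nat.eq_zero_or_pos k with rfl | hk
  · simp [ell_zero_right]
  simp only [ell, Nat.cast_add, add_mul]
  gcongr <;> linarith [Nat.cast_nonneg (α := ℝ) s, Nat.cast_nonneg (α := ℝ) k]

lemma choose_le_exp_ell_sub (n k : ℕ) : (n.choose k : ℝ) ≤ Real.exp (ell n k - k) := by
  rcases Nat.eq_zero_or_pos k with rfl | hk
  · simp [ell_zero_right]
  rcases Nat.eq_zero_or_pos n with rfl | hn
  · simpa [Nat.choose_eq_zero_of_lt hk] using Real.exp_nonneg _
  calc (n.choose k : ℝ) ≤ n ^ k / k.factorial := Nat.choose_le_pow_div k n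
    _ = (n / k) ^ k * (k ^ k / k.factorial) := by
        rw [div_pow, mul_div_assoc', div_mul_cancel₀ _ (by positivity)]
    _ ≤ (n / k) ^ k * Real.exp k := by
        gcongr
        exact Real.pow_div_factorial_le_exp k (by positivity) k
    _ = Real.exp (k * Real.log (n / k)) * Real.exp k := by
        rw [Real.exp_nat_mul, Real.exp_log (by positivity)]
    _ = Real.exp (ell n k - k) := by
        rw [← Real.exp_add, ell_eq_mul_two_add_log hn.ne']
        ring_nf

end Ell

section Finset

lemma sum_sq_le_two_mul_sum_sq_add {ι : Type*} (S : Finset ι) (x θ : ι → ℝ) :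
    ∑ i ∈ S, x i ^ 2 ≤ 2 * (∑ i ∈ S, θ i ^ 2 + ∑ i ∈ S, (x i - θ i) ^ 2) := by
  rw [← sum_add_distrib, mul_sum]
  gcongr with i
  simpa using add_sq_le (a := θ i) (b := x i - θ i)

variable {ι : Type*} [Fintype ι]

lemma sum_exp_neg_ell_card_le :
    ∑ J : Finset ι, Real.exp (-ell (Fintype.card ι) #J) ≤ (1 - Real.exp (-1))⁻¹ := by
  have hlt : Real.exp (-1) < 1 := by simp
  calc ∑ J : Finset ι, Real.exp (-ell (Fintype.card ι) #J)
      = ∑ k ∈ range (Fintype.card ι + 1),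
          ((Fintype.card ι).choose k : ℝ) * Real.exp (-ell (Fintype.card ι) k) := by
        simpa using sum_powerset_apply_card (fun k ↦ Real.exp (-ell (Fintype.card ι) k))
          (x := (univ : Finset ι))
    _ ≤ ∑ k ∈ range (Fintype.card ι + 1), Real.exp (-1) ^ k := by
        gcongr with k
        calc ((Fintype.card ι).choose k : ℝ) * Real.exp (-ell (Fintype.card ι) k)
            ≤ Real.exp (ell (Fintype.card ι) k - k) * Real.exp (-ell (Fintype.card ι) k) := by
              gcongr
              exact choose_le_exp_ell_sub _ k
          _ = Real.exp (-1) ^ k := by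
              rw [← Real.exp_add, ← Real.exp_nat_mul]
              ring_nf
    _ ≤ ∑' k, Real.exp (-1) ^ k :=
        (summable_geometric_of_lt_one (Real.exp_nonneg _) hlt).sum_le_tsum _ fun _ _ ↦ by positivity
    _ = (1 - Real.exp (-1))⁻¹ := tsum_geometric_of_lt_one (Real.exp_nonneg _) hlt

variable [DecidableEq ι]

lemma ell_card_union_le (I J : Finset ι) :
    ell (Fintype.card ι) #(I ∪ J) ≤ ell (Fintype.card ι) #I + ell (Fintype.card ι) #J :=
  calc ell (Fintype.card ι) #(I ∪ J)
      = ell (Fintype.card ι) (#I + #(J \ I)) := by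
        rw [union_comm, ← card_sdiff_add_card, add_comm]
    _ ≤ ell (Fintype.card ι) #I + ell (Fintype.card ι) #(J \ I) := ell_add_le _ _ _
    _ ≤ ell (Fintype.card ι) #I + ell (Fintype.card ι) #J := by
        gcongr
        exact monotoneOn_ell _ (card_le_univ _) (card_le_univ _) (card_le_card sdiff_subset)

lemma sum_compl_eq_sum_compl_union_add_sum_sdiff {M : Type*} [AddCommMonoid M] (f : ι → M)
    (I J : Finset ι) : ∑ i ∈ Iᶜ, f i = ∑ i ∈ (I ∪ J)ᶜ, f i + ∑ i ∈ J \ I, f i := by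
  have hsubset : J \ I ⊆ Iᶜ := fun i ↦ by simp
  rw [← sum_sdiff hsubset]
  congr 2
  ext i
  simp only [mem_compl, mem_union, mem_sdiff]
  tauto

/-- The criterion `∑_{i ∉ I} x_i² + κ ℓ(|I|)`, with `ℓ = ell n` for the number `n` of coordinates.
The preselector minimizes it for the data with `κ = K σ²`, the active set for `x = θ` with
`κ = A σ²`. -/
noncomputable def penalizedSq (κ : ℝ) (x : ι → ℝ) (I : Finset ι) : ℝ :=
  ∑ i ∈ Iᶜ, x i ^ 2 + κ * ell (Fintype.card ι) #I

variable {κ : ℝ} {x θ : ι → ℝ} {I J : Finset ι}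

lemma sum_sdiff_sq_le_of_penalizedSq_le_union (hκ : 0 ≤ κ)
    (hI : penalizedSq κ θ I ≤ penalizedSq κ θ (I ∪ J)) :
    ∑ i ∈ J \ I, θ i ^ 2 ≤ κ * ell (Fintype.card ι) #J := by
  have hunion := mul_le_mul_of_nonneg_left (ell_card_union_le I J) hκ
  simp only [penalizedSq, sum_compl_eq_sum_compl_union_add_sum_sdiff _ I J] at hI
  linarith

lemma mul_ell_sub_le_sum_sdiff_sq_of_penalizedSq_le
    (hJ : penalizedSq κ x J ≤ penalizedSq κ x I) :
    κ * (ell (Fintype.card ι) #J - ell (Fintype.card ι) #I) ≤ ∑ i ∈ J \ I, x i ^ 2 := by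
  have hcompl : ∑ i ∈ (I ∪ J)ᶜ, x i ^ 2 ≤ ∑ i ∈ Jᶜ, x i ^ 2 := by
    gcongr
    exact subset_union_right
  simp only [penalizedSq, sum_compl_eq_sum_compl_union_add_sum_sdiff _ I J] at hJ
  linarith

lemma mul_ell_le_sum_sq_sub {a : ℝ} (ha : 0 ≤ a) (hκ : 0 ≤ κ)
    (hJ : penalizedSq κ x J ≤ penalizedSq κ x I)
    (hI : penalizedSq a θ I ≤ penalizedSq a θ (I ∪ J)) (hIJ : 4 * #I ≤ #J) :
    (κ / 4 - a) * ell (Fintype.card ι) #J ≤ ∑ i ∈ J, (x i - θ i) ^ 2 := by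
  have hhalf := mul_le_mul_of_nonneg_left (two_mul_ell_le_ell hIJ (card_le_univ J)) hκ
  have hdata := mul_ell_sub_le_sum_sdiff_sq_of_penalizedSq_le hJ
  have hsignal := sum_sdiff_sq_le_of_penalizedSq_le_union ha hI
  have hsplit := sum_sq_le_two_mul_sum_sq_add (J \ I) x θ
  have hnoise : ∑ i ∈ J \ I, (x i - θ i) ^ 2 ≤ ∑ i ∈ J, (x i - θ i) ^ 2 := by
    gcongr
    exact sdiff_subset
  linarith

lemma mul_card_add_mul_ell_le_sum_sq_div {σ A K B C : ℝ} (hσ : σ ≠ 0) (hA : 0 ≤ A) (hB : 0 ≤ B)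
    (hC : 0 ≤ C) (hK : 4 * A + 2 * C + 4 * B ≤ K)
    (hJ : penalizedSq (K * σ ^ 2) x J ≤ penalizedSq (K * σ ^ 2) x I)
    (hI : penalizedSq (A * σ ^ 2) θ I ≤ penalizedSq (A * σ ^ 2) θ (I ∪ J))
    (hIJ : 4 * #I ≤ #J) :
    C * #J + B * ell (Fintype.card ι) #J ≤ ∑ i ∈ J, ((x i - θ i) / σ) ^ 2 := by
  have hK₀ : 0 ≤ K := by linarith
  have hell := ell_nonneg (card_le_univ J)
  calc C * #J + B * ell (Fintype.card ι) #J
      ≤ (C / 2 + B) * ell (Fintype.card ι) #J := by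
        linarith [mul_le_mul_of_nonneg_left (two_mul_le_ell (card_le_univ J)) hC]
    _ ≤ (K / 4 - A) * ell (Fintype.card ι) #J := by
        gcongr
        linarith
    _ = (K * σ ^ 2 / 4 - A * σ ^ 2) * ell (Fintype.card ι) #J / σ ^ 2 := by field_simp
    _ ≤ (∑ i ∈ J, (x i - θ i) ^ 2) / σ ^ 2 := by
        gcongr
        exact mul_ell_le_sum_sq_sub (by positivity) (by positivity) hJ hI hIJ
    _ = ∑ i ∈ J, ((x i - θ i) / σ) ^ 2 := by simp only [div_pow, sum_div]

end Finset

section Probability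

variable {ι Ω : Type*} [MeasurableSpace Ω] {μ : Measure Ω}

/-- Condition (A1) for the noise `ξ` under one law `μ`, with constants `C = C_ξ`, `H = H_ξ`,
`α = α_ξ`. -/
def HasExpSqTail (μ : Measure Ω) (ξ : Ω → ι → ℝ) (C H α : ℝ) : Prop :=
  ∀ (I : Finset ι) (M : ℝ), 0 ≤ M →
    μ {ω | C * #I + M ≤ ∑ i ∈ I, ξ ω i ^ 2} ≤ ENNReal.ofReal (H * Real.exp (-α * M))

variable [Fintype ι]

lemma HasExpSqTail.measure_mul_card_add_mul_ell_le {ξ : Ω → ι → ℝ} {C H α r M : ℝ}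
    {s : ℕ} {J : Finset ι} (hξ : HasExpSqTail μ ξ C H α) (hH : 0 ≤ H) (hα : 0 < α) (hr : 0 ≤ r)
    (hM : 0 ≤ M) (hJ : 4 * (s : ℝ) + M ≤ #J) :
    μ {ω | C * #J + (1 + r) / α * ell (Fintype.card ι) #J ≤ ∑ i ∈ J, ξ ω i ^ 2} ≤
      ENNReal.ofReal (H * Real.exp (-r * ell (Fintype.card ι) s) * Real.exp (-r * M / 2) *
        Real.exp (-ell (Fintype.card ι) #J)) := by
  have hell := ell_nonneg (card_le_univ J)
  have hgap := mul_le_mul_of_nonneg_left (ell_add_half_le_ell hM hJ (card_le_univ J)) hr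
  refine (hξ J _ (by positivity)).trans (ENNReal.ofReal_le_ofReal ?_)
  rw [mul_assoc, mul_assoc, ← Real.exp_add, ← Real.exp_add, neg_mul, ← mul_assoc α,
    mul_div_cancel₀ _ hα.ne']
  gcongr
  linarith

lemma measure_biUnion_le_of_le_exp_neg_ell {c : ℝ} (hc : 0 ≤ c) {E : Finset ι → Set Ω}
    {T : Finset (Finset ι)}
    (hE : ∀ J ∈ T, μ (E J) ≤ ENNReal.ofReal (c * Real.exp (-ell (Fintype.card ι) #J))) :
    μ (⋃ J ∈ T, E J) ≤ ENNReal.ofReal (c * (1 - Real.exp (-1))⁻¹) :=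
  calc μ (⋃ J ∈ T, E J) ≤ ∑ J ∈ T, μ (E J) := measure_biUnion_finset_le _ _
    _ ≤ ∑ J ∈ T, ENNReal.ofReal (c * Real.exp (-ell (Fintype.card ι) #J)) := sum_le_sum hE
    _ ≤ ∑ J, ENNReal.ofReal (c * Real.exp (-ell (Fintype.card ι) #J)) := by
        gcongr
        exact subset_univ T
    _ = ENNReal.ofReal (c * ∑ J : Finset ι, Real.exp (-ell (Fintype.card ι) #J)) := by
        rw [mul_sum, ENNReal.ofReal_sum_of_nonneg fun J _ ↦ by positivity]
    _ ≤ ENNReal.ofReal (c * (1 - Real.exp (-1))⁻¹) := by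
        gcongr
        exact sum_exp_neg_ell_card_le

theorem stmt_1_general [DecidableEq ι] {X : Ω → ι → ℝ} {θ : ι → ℝ} {σ C H α A K r M : ℝ}
    (hσ : σ ≠ 0) (hC : 0 ≤ C) (hH : 0 ≤ H) (hα : 0 < α) (hA : 0 ≤ A) (hr : 0 ≤ r) (hM : 0 ≤ M)
    (hK : 4 * A + 2 * C + 4 * ((1 + r) / α) ≤ K)
    (hξ : HasExpSqTail μ (fun ω i ↦ (X ω i - θ i) / σ) C H α) {Itil : Ω → Finset ι}
    {Istar : Finset ι}
    (hItil : ∀ ω I, penalizedSq (K * σ ^ 2) (X ω) (Itil ω) ≤ penalizedSq (K * σ ^ 2) (X ω) I)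
    (hIstar : ∀ I, penalizedSq (A * σ ^ 2) θ Istar ≤ penalizedSq (A * σ ^ 2) θ I) :
    μ {ω | 4 * (#Istar : ℝ) + M ≤ #(Itil ω)} ≤
      ENNReal.ofReal (H / (1 - Real.exp (-1)) * Real.exp (-r * ell (Fintype.card ι) #Istar) *
        Real.exp (-r * M / 2)) := by
  let T : Finset (Finset ι) := {J | 4 * (#Istar : ℝ) + M ≤ #J}
  let E (J : Finset ι) : Set Ω := {ω | C * #J + (1 + r) / α * ell (Fintype.card ι) #J ≤
    ∑ i ∈ J, ((X ω i - θ i) / σ) ^ 2}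
  have hsubset : {ω | 4 * (#Istar : ℝ) + M ≤ #(Itil ω)} ⊆ ⋃ J ∈ T, E J := by
    intro ω (hω : 4 * (#Istar : ℝ) + M ≤ #(Itil ω))
    have hcard : 4 * #Istar ≤ #(Itil ω) := by exact_mod_cast le_of_add_le_of_nonneg_left hω hM
    exact Set.mem_biUnion (by simpa [T] using hω) (mul_card_add_mul_ell_le_sum_sq_div hσ hA
      (by positivity) hC hK (hItil ω Istar) (hIstar _) hcard)
  have hE : ∀ J ∈ T, μ (E J) ≤ ENNReal.ofReal (H * Real.exp (-r * ell (Fintype.card ι) #Istar) *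
      Real.exp (-r * M / 2) * Real.exp (-ell (Fintype.card ι) #J)) :=
    fun J hJ ↦ hξ.measure_mul_card_add_mul_ell_le hH hα hr hM (by simpa [T] using hJ)
  refine (measure_mono hsubset).trans <|
    (measure_biUnion_le_of_le_exp_neg_ell (by positivity) hE).trans_eq ?_
  ring_nf

end Probability

theorem stmt_1 (Cξ Hξ αξ : ℝ) (hCξ : 0 < Cξ) (hHξ : 0 < Hξ) (hαξ : 0 < αξ) (A₀ : ℝ) (hA₀ : 0 < A₀) :
    ∃ K₀ M₁ α₀ : ℝ, 0 < K₀ ∧ 0 < M₁ ∧ 0 < α₀ ∧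
      ∀ (n : ℕ) (σ : ℝ), 0 < σ →
        ∀ P : (Fin n → ℝ) → Measure (Fin n → ℝ),
          (∀ θ, IsProbabilityMeasure (P θ)) →
          (∀ (θ : Fin n → ℝ) (I : Finset (Fin n)) (M : ℝ), 0 ≤ M →
            P θ {x | Cξ * I.card + M ≤ ∑ i ∈ I, ((x i - θ i) / σ) ^ 2}
              ≤ ENNReal.ofReal (Hξ * Real.exp (-αξ * M))) →
          ∀ Itil : (Fin n → ℝ) → Finset (Fin n),
            (∀ (x : Fin n → ℝ) (I : Finset (Fin n)),
              (∑ i ∈ (Itil x)ᶜ, x i ^ 2) + K₀ * σ ^ 2 * ell n (Itil x).card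
                ≤ (∑ i ∈ Iᶜ, x i ^ 2) + K₀ * σ ^ 2 * ell n I.card) →
            ∀ (θ : Fin n → ℝ) (Istar : Finset (Fin n)),
              (∀ I : Finset (Fin n),
                (∑ i ∈ Istarᶜ, θ i ^ 2) + A₀ * σ ^ 2 * ell n Istar.card
                  ≤ (∑ i ∈ Iᶜ, θ i ^ 2) + A₀ * σ ^ 2 * ell n I.card) →
              ∀ M : ℝ, 0 ≤ M →
                P θ {x | M₁ * Istar.card + M ≤ ((Itil x).card : ℝ)}
                  ≤ ENNReal.ofReal (Hξ / (1 - Real.exp (-1)) *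
                      Real.exp (-α₀ * ell n Istar.card) * Real.exp (-α₀ * M / 2)) := by
  refine ⟨4 * A₀ + 2 * Cξ + 4 * ((1 + 1) / αξ), 4, 1, by positivity, four_pos, one_pos, ?_⟩
  intro n σ hσ P _ hξ Itil hItil θ Istar hIstar M hM
  simpa only [Fintype.card_fin] using stmt_1_general hσ.ne' hCξ.le hHξ.le hαξ hA₀.le zero_le_one hM
    le_rfl (hξ θ) (by simpa [penalizedSq] using hItil) (by simpa [penalizedSq] using hIstar)
end

section
/- Assume Condition (A1) and the standing assumptions. Then there exist constants H₂, α₃ > 0, depending only on the constants of (A1) and of the standing assumptions, such that for every θ ∈ ℝⁿ the non-discovery rate of the selector satisfies E_θ[ |I_*∖Î(K)| / |I_*| ] ≤ H₂·(n/(|I_*| ∨ 1))^{−α₃} (with the convention 0/0 := 0 when I_* = ∅). -/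
open MeasureTheory Finset
open scoped Classical

/-- The selector `Î(K)`: empty if the preselector `Ĩ(K)` is empty, otherwise all coordinates
with `X_i² ≥ K σ² log(q n / |Ĩ(K)|)`, where `q = e²`. -/
noncomputable def ihat {n : ℕ} (K σ : ℝ) (Itil : (Fin n → ℝ) → Finset (Fin n))
    (x : Fin n → ℝ) : Finset (Fin n) :=
  if Itil x = ∅ then ∅
  else Finset.univ.filter fun i =>
    K * σ ^ 2 * Real.log (Real.exp 2 * (n : ℝ) / (Itil x).card) ≤ (x i) ^ 2

/-!
By linearity the non-discovery rate is at most the largest probability with which a coordinate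
`i ∈ I_*` is missed, so a single such `i` may be fixed. Removing `i` from the penalized minimizer
`I_*` cannot help, hence `θ_i²` exceeds the increment of the penalty, which is at least
`A₁ σ² (log (q n / |I_*|) - 1)`. If `|Ĩ| > δ |I_*|`, then the selection threshold exceeds
`K σ² log (q n / |I_*|)` by at most the constant `K σ² log δ⁻¹`, so `i` can be missed only if the
noise `ξ_i²` is of order `log (q n / |I_*|)`. That event, like `|Ĩ| ≤ δ |I_*|`, has probability
bounded by a negative power of `n / |I_*|`.
-/

section PenalizedMinimizer

variable {ι : Type*} [Fintype ι] [DecidableEq ι]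

/-- `I` minimizes, among all subsets of the index type, the residual `∑_{i ∉ I} v i` plus a
penalty `pen |I|` on its cardinality. The active sets `I_*(A, θ)` are the case `v i = θ_i²`,
`pen k = A σ² ell n k`; ties may be broken in any way. -/
def IsPenalizedMinimizer (v : ι → ℝ) (pen : ℕ → ℝ) (I : Finset ι) : Prop :=
  ∀ J : Finset ι, (∑ i ∈ Iᶜ, v i) + pen #I ≤ (∑ i ∈ Jᶜ, v i) + pen #J

lemma IsPenalizedMinimizer.pen_sub_pen_pred_le {v : ι → ℝ} {pen : ℕ → ℝ} {I : Finset ι}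
    (hI : IsPenalizedMinimizer v pen I) {i : ι} (hi : i ∈ I) :
    pen #I - pen (#I - 1) ≤ v i := by
  have herase := hI (I.erase i)
  rw [compl_erase, sum_insert (by simpa using hi), card_erase_of_mem hi] at herase
  linarith

end PenalizedMinimizer

section Ell

variable {n k : ℕ}

lemma log_exp_mul_div {x y : ℝ} (a : ℝ) (hx : x ≠ 0) (hy : y ≠ 0) :
    Real.log (Real.exp a * x / y) = a + Real.log (x / y) := by
  rw [mul_div_assoc, Real.log_mul (Real.exp_ne_zero a) (div_ne_zero hx hy), Real.log_exp]

lemma mul_log_succ_sub_log_le_one (k : ℕ) :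
    (k : ℝ) * (Real.log (k + 1) - Real.log k) ≤ 1 := by
  rcases Nat.eq_zero_or_pos k with rfl | hk
  · simp
  have hk : (0 : ℝ) < k := by exact_mod_cast hk
  calc (k : ℝ) * (Real.log (k + 1) - Real.log k)
      = k * Real.log ((k + 1) / k) := by rw [Real.log_div (by positivity) hk.ne']
    _ ≤ k * ((k + 1) / k - 1) := by
        gcongr
        exact Real.log_le_sub_one_of_pos (by positivity)
    _ = 1 := by
        field_simp
        ring

lemma ell_eq_mul_sub_log (hn : n ≠ 0) (k : ℕ) :
    ell n k = k * (2 + Real.log n - Real.log k) := by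
  rcases eq_or_ne k 0 with rfl | hk
  · simp [ell]
  · have hn : (n : ℝ) ≠ 0 := by exact_mod_cast hn
    have hk : (k : ℝ) ≠ 0 := by exact_mod_cast hk
    rw [ell, log_exp_mul_div 2 hn hk, Real.log_div hn hk, add_sub_assoc]

lemma log_sub_one_le_ell_sub_ell_pred (hn : n ≠ 0) (hk : k ≠ 0) :
    Real.log (Real.exp 2 * n / k) - 1 ≤ ell n k - ell n (k - 1) := by
  obtain ⟨j, rfl⟩ := Nat.exists_eq_succ_of_ne_zero hk
  have hn' : (n : ℝ) ≠ 0 := by exact_mod_cast hn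
  have hj' : ((j + 1 : ℕ) : ℝ) ≠ 0 := by exact_mod_cast hk
  rw [Nat.succ_eq_add_one, Nat.add_sub_cancel, ell_eq_mul_sub_log hn, ell_eq_mul_sub_log hn,
    log_exp_mul_div 2 hn' hj', Real.log_div hn' hj']
  push_cast
  linarith [mul_log_succ_sub_log_le_one j]

lemma log_div_le_ell (hk : k ≠ 0) (hkn : k ≤ n) : Real.log (n / k) ≤ ell n k := by
  have hk1 : (1 : ℝ) ≤ k := by exact_mod_cast Nat.one_le_iff_ne_zero.mpr hk
  have hkn' : (k : ℝ) ≤ n := by exact_mod_cast hkn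
  have hlog : 0 ≤ Real.log (n / k) := Real.log_nonneg ((one_le_div (by linarith)).mpr hkn')
  rw [ell, log_exp_mul_div 2 (by linarith) (by linarith)]
  nlinarith

lemma exp_neg_mul_ell_le_rpow {a : ℝ} (ha : 0 ≤ a) (hk : k ≠ 0) (hkn : k ≤ n) :
    Real.exp (-a * ell n k) ≤ ((n : ℝ) / k) ^ (-a) := by
  have hk0 : (0 : ℝ) < k := by exact_mod_cast Nat.pos_of_ne_zero hk
  have hn0 : (0 : ℝ) < n := hk0.trans_le (by exact_mod_cast hkn)
  rw [Real.rpow_def_of_pos (by positivity), Real.exp_le_exp]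
  nlinarith [log_div_le_ell hk hkn]

lemma mul_log_sub_one_le_of_mem_isPenalizedMinimizer {v : Fin n → ℝ} {c : ℝ} (hc : 0 ≤ c)
    {I : Finset (Fin n)} (hI : IsPenalizedMinimizer v (fun k => c * ell n k) I) {i : Fin n}
    (hi : i ∈ I) :
    c * (Real.log (Real.exp 2 * n / #I) - 1) ≤ v i :=
  calc c * (Real.log (Real.exp 2 * n / #I) - 1)
      ≤ c * (ell n #I - ell n (#I - 1)) := by
        exact mul_le_mul_of_nonneg_left
          (log_sub_one_le_ell_sub_ell_pred i.pos.ne' (card_ne_zero_of_mem hi)) hc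
    _ = c * ell n #I - c * ell n (#I - 1) := mul_sub _ _ _
    _ ≤ v i := hI.pen_sub_pen_pred_le hi

end Ell

section MissedCoordinate

lemma log_div_le_log_div_sub_log {a k m δ : ℝ} (ha : 0 < a) (hk : 0 < k) (hδ : 0 < δ)
    (hm : δ * k ≤ m) : Real.log (a / m) ≤ Real.log (a / k) - Real.log δ := by
  have hδk : 0 < δ * k := mul_pos hδ hk
  rw [← Real.log_div (by positivity) hδ.ne', div_div, mul_comm k δ]
  exact Real.log_le_log (div_pos ha (hδk.trans_le hm)) (by gcongr)

lemma notMem_ihat_iff {n : ℕ} {K σ : ℝ} {Itil : (Fin n → ℝ) → Finset (Fin n)} {x : Fin n → ℝ}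
    (hne : (Itil x).Nonempty) {i : Fin n} :
    i ∉ ihat K σ Itil x ↔
      x i ^ 2 < K * σ ^ 2 * Real.log (Real.exp 2 * (n : ℝ) / #(Itil x)) := by
  simp [ihat, hne.ne_empty]

lemma sq_le_three_halves_mul_sq_add_three_mul_sub_sq (t x : ℝ) :
    t ^ 2 ≤ 3 / 2 * x ^ 2 + 3 * (x - t) ^ 2 := by
  nlinarith [sq_nonneg (3 * x - 2 * t)]

lemma le_sq_noise_of_le_sq_signal {A K σ L d t x : ℝ} (hA : 0 ≤ A) (hσ : 0 < σ) (hL : 2 ≤ L)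
    (ht : A * σ ^ 2 * (L - 1) ≤ t ^ 2) (hx : x ^ 2 ≤ K * σ ^ 2 * (L - d)) :
    (A / 6 - K / 2) * L + K / 2 * d ≤ ((x - t) / σ) ^ 2 := by
  have hhalf : A * σ ^ 2 * (L / 2) ≤ A * σ ^ 2 * (L - 1) := by
    gcongr
    linarith
  rw [div_pow, le_div_iff₀ (by positivity)]
  linarith [sq_le_three_halves_mul_sq_add_three_mul_sub_sq t x]

lemma le_sq_noise_of_notMem_ihat {n k : ℕ} {A K σ δ : ℝ} (hA : 0 ≤ A) (hK : 0 ≤ K)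
    (hσ : 0 < σ) (hδ : 0 < δ) (hk : k ≠ 0) (hkn : k ≤ n)
    {Itil : (Fin n → ℝ) → Finset (Fin n)} {x θ : Fin n → ℝ} {i : Fin n}
    (hsize : δ * k < #(Itil x))
    (hθ : A * σ ^ 2 * (Real.log (Real.exp 2 * n / k) - 1) ≤ θ i ^ 2)
    (hmiss : i ∉ ihat K σ Itil x) :
    (A / 6 - K / 2) * Real.log (Real.exp 2 * n / k) + K / 2 * Real.log δ
      ≤ ((x i - θ i) / σ) ^ 2 := by
  have hk0 : (0 : ℝ) < k := by exact_mod_cast Nat.pos_of_ne_zero hk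
  have hkn' : (k : ℝ) ≤ n := by exact_mod_cast hkn
  have hn0 : (0 : ℝ) < n := hk0.trans_le hkn'
  have hne : (Itil x).Nonempty := by
    have hpos : (0 : ℝ) < #(Itil x) := (mul_pos hδ hk0).trans hsize
    exact card_pos.mp (by exact_mod_cast hpos)
  have htwo : 2 ≤ Real.log (Real.exp 2 * n / k) := by
    rw [log_exp_mul_div 2 hn0.ne' hk0.ne']
    linarith [Real.log_nonneg ((one_le_div hk0).mpr hkn')]
  refine le_sq_noise_of_le_sq_signal hA hσ htwo hθ ?_
  calc x i ^ 2 ≤ K * σ ^ 2 * Real.log (Real.exp 2 * n / #(Itil x)) :=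
        ((notMem_ihat_iff hne).mp hmiss).le
    _ ≤ K * σ ^ 2 * (Real.log (Real.exp 2 * n / k) - Real.log δ) := by
        gcongr
        exact log_div_le_log_div_sub_log (by positivity) hk0 hδ hsize.le

end MissedCoordinate

section Probability

variable {Ω : Type*} [MeasurableSpace Ω] {μ : Measure Ω}

lemma lintegral_card_sdiff_div_card_le {ι : Type*} [DecidableEq ι] (I : Finset ι)
    (J : Ω → Finset ι) {p : ENNReal} (hp : ∀ i ∈ I, μ {x | i ∉ J x} ≤ p) :
    ∫⁻ x, ENNReal.ofReal ((#(I \ J x) : ℝ) / #I) ∂μ ≤ p := by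
  rcases I.eq_empty_or_nonempty with rfl | hI
  · simp
  have hI0 : (#I : ENNReal) ≠ 0 := by simpa using hI.ne_empty
  -- The events need not be measurable, so they are replaced by measurable hulls.
  let S (i : ι) : Set Ω := toMeasurable μ {x | i ∉ J x}
  have hS (i : ι) : MeasurableSet (S i) := measurableSet_toMeasurable μ _
  have hpoint (x : Ω) : ENNReal.ofReal ((#(I \ J x) : ℝ) / #I)
      ≤ (#I : ENNReal)⁻¹ * ∑ i ∈ I, (S i).indicator 1 x := by
    rw [ENNReal.ofReal_div_of_pos (by exact_mod_cast hI.card_pos), ENNReal.ofReal_natCast,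
      ENNReal.ofReal_natCast, ENNReal.div_eq_inv_mul]
    gcongr
    calc (#(I \ J x) : ENNReal) = ∑ i ∈ I \ J x, (S i).indicator 1 x := by
          rw [card_eq_sum_ones, Nat.cast_sum]
          refine sum_congr rfl fun i hi => ?_
          have hiS : x ∈ S i := subset_toMeasurable μ _ (mem_sdiff.mp hi).2
          simp [hiS]
      _ ≤ ∑ i ∈ I, (S i).indicator 1 x := sum_le_sum_of_subset sdiff_subset
  calc ∫⁻ x, ENNReal.ofReal ((#(I \ J x) : ℝ) / #I) ∂μ
      ≤ ∫⁻ x, (#I : ENNReal)⁻¹ * ∑ i ∈ I, (S i).indicator 1 x ∂μ := lintegral_mono hpoint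
    _ = (#I : ENNReal)⁻¹ * ∑ i ∈ I, μ {x | i ∉ J x} := by
        have hmeas (i : ι) : Measurable ((S i).indicator (1 : Ω → ENNReal)) :=
          measurable_one.indicator (hS i)
        rw [lintegral_const_mul _ (by fun_prop), lintegral_finsetSum _ fun i _ => hmeas i]
        simp only [lintegral_indicator_one (hS _), S, measure_toMeasurable]
    _ ≤ (#I : ENNReal)⁻¹ * ∑ _i ∈ I, p := by
        gcongr with i hi
        exact hp i hi
    _ = p := by
        rw [sum_const, nsmul_eq_mul, ← mul_assoc,
          ENNReal.inv_mul_cancel hI0 (ENNReal.natCast_ne_top _), one_mul]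

lemma measure_le_max_one_mul_exp_of_exp_tail [IsProbabilityMeasure μ] {Z : Ω → ℝ} {C H α : ℝ}
    (hα : 0 ≤ α)
    (htail : ∀ M : ℝ, 0 ≤ M → μ {x | C + M ≤ Z x} ≤ ENNReal.ofReal (H * Real.exp (-α * M)))
    (m : ℝ) : μ {x | C + m ≤ Z x} ≤ ENNReal.ofReal (max H 1 * Real.exp (-α * m)) := by
  rcases le_total 0 m with hm | hm
  · refine (htail m hm).trans (ENNReal.ofReal_le_ofReal ?_)
    gcongr
    exact le_max_left _ _
  · refine prob_le_one.trans (ENNReal.one_le_ofReal.mpr ?_)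
    exact one_le_mul_of_one_le_of_one_le (le_max_right _ _) (Real.one_le_exp (by nlinarith))

lemma measure_le_mul_rpow_of_exp_tail [IsProbabilityMeasure μ] {Z : Ω → ℝ}
    {C H α a b ρ δ : ℝ} (hα : 0 ≤ α) (ha : C ≤ 2 * a) (hρ : 0 < ρ) (hδ : 0 < δ)
    (htail : ∀ M : ℝ, 0 ≤ M → μ {x | C + M ≤ Z x} ≤ ENNReal.ofReal (H * Real.exp (-α * M))) :
    μ {x | a * (2 + Real.log ρ) + b * Real.log δ ≤ Z x}
      ≤ ENNReal.ofReal (max H 1 * δ ^ (-(α * b)) * ρ ^ (-(α * a))) :=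
  calc μ {x | a * (2 + Real.log ρ) + b * Real.log δ ≤ Z x}
      ≤ μ {x | C + (a * Real.log ρ + b * Real.log δ) ≤ Z x} := by
        have hthreshold : C + (a * Real.log ρ + b * Real.log δ)
            ≤ a * (2 + Real.log ρ) + b * Real.log δ := by linarith
        exact measure_mono fun x hx => hthreshold.trans hx
    _ ≤ ENNReal.ofReal (max H 1 * Real.exp (-α * (a * Real.log ρ + b * Real.log δ))) :=
        measure_le_max_one_mul_exp_of_exp_tail hα htail _
    _ = ENNReal.ofReal (max H 1 * δ ^ (-(α * b)) * ρ ^ (-(α * a))) := by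
        rw [Real.rpow_def_of_pos hδ, Real.rpow_def_of_pos hρ, mul_assoc, ← Real.exp_add]
        ring_nf

end Probability

section NonDiscovery

variable {n : ℕ} {σ A K C H H₀ α α' δ : ℝ} {μ : Measure (Fin n → ℝ)} [IsProbabilityMeasure μ]
  {θ : Fin n → ℝ} {I : Finset (Fin n)} {Itil : (Fin n → ℝ) → Finset (Fin n)}

lemma measure_notMem_ihat_le (hσ : 0 < σ) (hA : 0 ≤ A) (hK : 0 ≤ K) (hα : 0 ≤ α)
    (hα' : 0 ≤ α') (hH₀ : 0 ≤ H₀) (hδ : 0 < δ) (hgap : C ≤ 2 * (A / 6 - K / 2))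
    (hI : IsPenalizedMinimizer (fun i => θ i ^ 2) (fun k => A * σ ^ 2 * ell n k) I)
    (hunder : μ {x | (#(Itil x) : ℝ) ≤ δ * #I}
      ≤ ENNReal.ofReal (H₀ * Real.exp (-α' * ell n #I)))
    {i : Fin n} (hi : i ∈ I)
    (htail : ∀ M : ℝ, 0 ≤ M → μ {x | C + M ≤ ((x i - θ i) / σ) ^ 2}
      ≤ ENNReal.ofReal (H * Real.exp (-α * M))) :
    μ {x | i ∉ ihat K σ Itil x}
      ≤ ENNReal.ofReal ((H₀ + max H 1 * δ ^ (-(α * (K / 2)))) *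
          ((n : ℝ) / #I) ^ (-min (α * (A / 6 - K / 2)) α')) := by
  have hcard : #I ≠ 0 := card_ne_zero_of_mem hi
  have hcard_le : #I ≤ n := card_finset_fin_le I
  have hI0 : (0 : ℝ) < #I := by exact_mod_cast Nat.pos_of_ne_zero hcard
  have hn0 : (0 : ℝ) < n := by exact_mod_cast i.pos
  have hratio : 1 ≤ (n : ℝ) / #I := (one_le_div hI0).mpr (by exact_mod_cast hcard_le)
  set β := min (α * (A / 6 - K / 2)) α'
  let smallPreselection : Set (Fin n → ℝ) := {x | (#(Itil x) : ℝ) ≤ δ * #I}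
  let largeNoise : Set (Fin n → ℝ) := {x | (A / 6 - K / 2) * (2 + Real.log (n / #I))
    + K / 2 * Real.log δ ≤ ((x i - θ i) / σ) ^ 2}
  have hcover : {x | i ∉ ihat K σ Itil x} ⊆ smallPreselection ∪ largeNoise := by
    intro x hmiss
    refine or_iff_not_imp_left.mpr fun hsize => ?_
    rw [Set.mem_ofPred_eq, ← log_exp_mul_div 2 hn0.ne' hI0.ne']
    exact le_sq_noise_of_notMem_ihat hA hK hσ hδ hcard hcard_le (not_le.mp hsize)
      (mul_log_sub_one_le_of_mem_isPenalizedMinimizer (by positivity) hI hi) hmiss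
  have hsmall : μ smallPreselection ≤ ENNReal.ofReal (H₀ * ((n : ℝ) / #I) ^ (-β)) := by
    refine hunder.trans (ENNReal.ofReal_le_ofReal ?_)
    gcongr
    exact (exp_neg_mul_ell_le_rpow hα' hcard hcard_le).trans
      (Real.rpow_le_rpow_of_exponent_le hratio (neg_le_neg (min_le_right _ _)))
  have hlarge : μ largeNoise
      ≤ ENNReal.ofReal (max H 1 * δ ^ (-(α * (K / 2))) * ((n : ℝ) / #I) ^ (-β)) := by
    refine (measure_le_mul_rpow_of_exp_tail hα hgap (by positivity) hδ htail).trans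
      (ENNReal.ofReal_le_ofReal ?_)
    gcongr
    exact min_le_left _ _
  calc μ {x | i ∉ ihat K σ Itil x}
      ≤ μ smallPreselection + μ largeNoise := (measure_mono hcover).trans (measure_union_le _ _)
    _ ≤ _ := add_le_add hsmall hlarge
    _ = _ := by rw [← ENNReal.ofReal_add (by positivity) (by positivity), add_mul]

theorem stmt_5_general (hσ : 0 < σ) (hA : 0 ≤ A) (hK : 0 ≤ K) (hα : 0 ≤ α)
    (hα' : 0 ≤ α') (hH₀ : 0 ≤ H₀) (hδ : 0 < δ) (hgap : C ≤ 2 * (A / 6 - K / 2))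
    (hI : IsPenalizedMinimizer (fun i => θ i ^ 2) (fun k => A * σ ^ 2 * ell n k) I)
    (hunder : μ {x | (#(Itil x) : ℝ) ≤ δ * #I}
      ≤ ENNReal.ofReal (H₀ * Real.exp (-α' * ell n #I)))
    (htail : ∀ i ∈ I, ∀ M : ℝ, 0 ≤ M → μ {x | C + M ≤ ((x i - θ i) / σ) ^ 2}
      ≤ ENNReal.ofReal (H * Real.exp (-α * M))) :
    ∫⁻ x, ENNReal.ofReal ((#(I \ ihat K σ Itil x) : ℝ) / #I) ∂μ
      ≤ ENNReal.ofReal ((H₀ + max H 1 * δ ^ (-(α * (K / 2)))) *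
          ((n : ℝ) / ↑(max #I 1)) ^ (-min (α * (A / 6 - K / 2)) α')) := by
  refine lintegral_card_sdiff_div_card_le I _ fun i hi => ?_
  have hcard : 1 ≤ #I := card_pos.mpr ⟨i, hi⟩
  rw [max_eq_left hcard]
  exact measure_notMem_ihat_le hσ hA hK hα hα' hH₀ hδ hgap hI hunder hi (htail i hi)

end NonDiscovery

theorem stmt_5 (Cξ Hξ αξ : ℝ) (hCξ : 0 < Cξ) (hHξ : 0 < Hξ) (hαξ : 0 < αξ)
    (K A₀ A₁ α₀ α₁' M₁ δ : ℝ)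
    (hK : 0 < K) (hA₀ : 0 < A₀) (hA₁ : 0 < A₁) (hα₀ : 0 < α₀) (hα₁' : 0 < α₁')
    (hM₁ : 1 < M₁) (hδ : 0 < δ) (hδ1 : δ < 1) (hA01 : A₀ ≤ A₁)
    (hKC : A₀ + Cξ < K / 2)
    (hA1big : K / 2 + αξ⁻¹ * ((Cξ * αξ + 2) / 2 + 1) < A₁ / 6) :
    ∃ H₂ α₃ : ℝ, 0 < H₂ ∧ 0 < α₃ ∧
      ∀ (n : ℕ) (σ : ℝ), 0 < σ →
        ∀ P : (Fin n → ℝ) → Measure (Fin n → ℝ),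
          (∀ θ, IsProbabilityMeasure (P θ)) →
          (∀ (θ : Fin n → ℝ) (I : Finset (Fin n)) (M : ℝ), 0 ≤ M →
              P θ {x | Cξ * I.card + M ≤ ∑ i ∈ I, ((x i - θ i) / σ) ^ 2}
                ≤ ENNReal.ofReal (Hξ * Real.exp (-αξ * M))) →
          ∀ Itil : (Fin n → ℝ) → Finset (Fin n),
            (∀ (x : Fin n → ℝ) (I : Finset (Fin n)),
                (∑ i ∈ (Itil x)ᶜ, x i ^ 2) + K * σ ^ 2 * ell n (Itil x).card
                  ≤ (∑ i ∈ Iᶜ, x i ^ 2) + K * σ ^ 2 * ell n I.card) →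
            ∀ Istar : ℝ → (Fin n → ℝ) → Finset (Fin n),
              (∀ (A : ℝ) (θ : Fin n → ℝ), 0 < A → ∀ I : Finset (Fin n),
                  (∑ i ∈ (Istar A θ)ᶜ, θ i ^ 2) + A * σ ^ 2 * ell n (Istar A θ).card
                    ≤ (∑ i ∈ Iᶜ, θ i ^ 2) + A * σ ^ 2 * ell n I.card) →
              (∀ (θ : Fin n → ℝ) (M : ℝ), 0 ≤ M →
                  P θ {x | M₁ * (Istar A₀ θ).card + M ≤ ((Itil x).card : ℝ)}
                    ≤ ENNReal.ofReal (Hξ / (1 - Real.exp (-1)) *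
                        Real.exp (-α₀ * ell n (Istar A₀ θ).card - α₀ * M / 2))) →
              (∀ θ : Fin n → ℝ,
                  P θ {x | ((Itil x).card : ℝ) ≤ δ * (Istar A₁ θ).card}
                    ≤ ENNReal.ofReal (Hξ / (1 - Real.exp (-1)) *
                        Real.exp (-α₁' * ell n (Istar A₁ θ).card))) →
              ∀ θ : Fin n → ℝ,
                (∫⁻ x, ENNReal.ofReal
                    (((Istar A₁ θ \ ihat K σ Itil x).card : ℝ) /
                      ((Istar A₁ θ).card : ℝ)) ∂(P θ))
                  ≤ ENNReal.ofReal
                      (H₂ * ((n : ℝ) / (↑(max (Istar A₁ θ).card 1))) ^ (-α₃)) := by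
  have hH₀ : 0 < Hξ / (1 - Real.exp (-1)) := div_pos hHξ (by simp)
  have hgap : Cξ ≤ 2 * (A₁ / 6 - K / 2) := by
    have hMξ : αξ⁻¹ * ((Cξ * αξ + 2) / 2 + 1) = Cξ / 2 + 2 * αξ⁻¹ := by
      field_simp
      ring
    linarith [inv_pos.mpr hαξ]
  have hα₃ : 0 < min (αξ * (A₁ / 6 - K / 2)) α₁' :=
    lt_min (mul_pos hαξ (by linarith)) hα₁'
  refine ⟨Hξ / (1 - Real.exp (-1)) + max Hξ 1 * δ ^ (-(αξ * (K / 2))),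
    min (αξ * (A₁ / 6 - K / 2)) α₁', by positivity, hα₃, ?_⟩
  intro n σ hσ P hP hA1 Itil _ Istar hIstar _ hunder θ
  exact stmt_5_general hσ hA₁.le hK.le hαξ.le hα₁'.le hH₀.le hδ hgap (hIstar A₁ θ hA₁)
    (hunder θ) fun i _ M hM => by simpa using hA1 θ {i} M hM
end
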